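/- arXiv:1912.00992 — 7 statements merged into one kernel-verified Lean document; each statement's English description precedes it below -/
import Mathlib

section
/- Let X be a nonnegative real random variable whose law has a density f with respect to Lebesgue measure, where f is non-increasing on [0, ∞). Then for all real numbers x, y with 0 ≤ x < y one has P(x ≤ X ≤ y) ≤ ((y − x)/y) · P(X ≤ y); equivalently, the conditional probability P(X ≥ x | X ≤ y) is at most (y − x)/y. -/
open MeasureTheory
open scoped ENNReal

/-- Let `X` be a nonnegative real random variable whose law has a density `f`
with respect to Lebesgue measure, where `f` is non-increasing on `[0, ∞)` (and vanishes on
`(-∞, 0)`). Then for all reals `0 ≤ x < y`,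
`P(x ≤ X ≤ y) ≤ ((y - x)/y) · P(X ≤ y)`. -/
theorem stmt_0 {Ω : Type*} [MeasurableSpace Ω] (P : Measure Ω) [IsProbabilityMeasure P]
    (X : Ω → ℝ) (hX : Measurable X) (f : ℝ → ℝ≥0∞) (hf : Measurable f)
    (hlaw : P.map X = volume.withDensity f)
    (hXnn : ∀ᵐ ω ∂P, 0 ≤ X ω)
    (hf_mono : ∀ a b : ℝ, 0 ≤ a → a ≤ b → f b ≤ f a)
    (hf_neg : ∀ x : ℝ, x < 0 → f x = 0)
    (x y : ℝ) (hx : 0 ≤ x) (hxy : x < y) :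
    P {ω | x ≤ X ω ∧ X ω ≤ y} ≤ ENNReal.ofReal ((y - x) / y) * P {ω | X ω ≤ y} := by
  have key : ∀ s : Set ℝ, MeasurableSet s → P (X ⁻¹' s) = ∫⁻ t in s, f t := by
    intro s hs
    rw [← Measure.map_apply hX hs, hlaw, withDensity_apply _ hs]
  have hA : P (X ⁻¹' Set.Icc x y) ≤ f x * ENNReal.ofReal (y - x) := by
    rw [key _ measurableSet_Icc]
    calc ∫⁻ t in Set.Icc x y, f t ≤ ∫⁻ _ in Set.Icc x y, f x :=
          setLIntegral_mono measurable_const (fun t ht => hf_mono x t hx ht.1)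
      _ = _ := by rw [setLIntegral_const, Real.volume_Icc]
  have hB : f x * ENNReal.ofReal x ≤ P (X ⁻¹' Set.Ico 0 x) := by
    rw [key _ measurableSet_Ico]
    calc f x * ENNReal.ofReal x = ∫⁻ _ in Set.Ico 0 x, f x := by
          rw [setLIntegral_const, Real.volume_Ico, sub_zero]
      _ ≤ _ := setLIntegral_mono hf (fun t ht => hf_mono t x ht.1 ht.2.le)
  have hAB : P (X ⁻¹' Set.Icc x y) + P (X ⁻¹' Set.Ico 0 x) ≤ P {ω | X ω ≤ y} := by
    rw [← measure_union _ (hX measurableSet_Ico)]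
    · apply measure_mono
      rintro ω (h | h)
      · exact h.2
      · exact (h.2.trans hxy).le
    · rw [Set.disjoint_left]
      intro ω h h'
      exact absurd h.1 (not_le.mpr h'.2)
  have hmul : ENNReal.ofReal x * P (X ⁻¹' Set.Icc x y)
      ≤ ENNReal.ofReal (y - x) * P (X ⁻¹' Set.Ico 0 x) := by
    calc _ ≤ ENNReal.ofReal x * (f x * ENNReal.ofReal (y - x)) := by gcongr
      _ = ENNReal.ofReal (y - x) * (f x * ENNReal.ofReal x) := by ring
      _ ≤ _ := by gcongr
  change P (X ⁻¹' Set.Icc x y) ≤ _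
  refine le_trans ?_ (mul_le_mul_right hAB _)
  have hy : 0 < y := hx.trans_lt hxy
  have hyx : 0 ≤ y - x := by linarith
  rw [← ENNReal.ofReal_toReal (measure_ne_top P (X ⁻¹' Set.Icc x y)),
    ← ENNReal.ofReal_toReal (measure_ne_top P (X ⁻¹' Set.Ico 0 x))] at hmul ⊢
  generalize ha : (P (X ⁻¹' Set.Icc x y)).toReal = a at hmul ⊢
  generalize hb : (P (X ⁻¹' Set.Ico 0 x)).toReal = b at hmul ⊢
  have ha0 : 0 ≤ a := ha ▸ ENNReal.toReal_nonneg
  have hb0 : 0 ≤ b := hb ▸ ENNReal.toReal_nonneg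
  rw [← ENNReal.ofReal_mul hx, ← ENNReal.ofReal_mul hyx,
    ENNReal.ofReal_le_ofReal_iff (mul_nonneg hyx hb0)] at hmul
  rw [← ENNReal.ofReal_add ha0 hb0, ← ENNReal.ofReal_mul (div_nonneg hyx hy.le)]
  apply ENNReal.ofReal_le_ofReal
  rw [div_mul_eq_mul_div, le_div_iff₀ hy]
  linarith
end

section
/- Fix r > 0, m ∈ ℝ and σ > 0, and let X be a real random variable with the Gaussian distribution N(m, σ²). Then the function s ↦ P(X ≥ s + r | X ≥ s) is strictly decreasing on ℝ; equivalently, for all real numbers s₁ < s₂ one has P(X ≥ s₂ + r) · P(X ≥ s₁) < P(X ≥ s₁ + r) · P(X ≥ s₂). -/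
open MeasureTheory ProbabilityTheory
open scoped ENNReal

lemma aux_shift (f : ℝ → ℝ) (s r : ℝ) :
    ∫ x in Set.Ioi (s + r), f x = ∫ x in Set.Ioi s, f (x + r) := by
  have h := (measurePreserving_add_right (volume : Measure ℝ) r).setIntegral_preimage_emb
    (Homeomorph.addRight r).isClosedEmbedding.measurableEmbedding f (Set.Ioi (s + r))
  rw [← h]
  congr 2
  ext x
  simp

lemma aux_split (f : ℝ → ℝ) (hf : Integrable f) (a b : ℝ) (hab : a < b) :
    ∫ x in Set.Ioi a, f x = (∫ x in a..b, f x) + ∫ x in Set.Ioi b, f x := by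
  rw [intervalIntegral.integral_of_le hab.le, ← setIntegral_union, Set.Ioc_union_Ioi_eq_Ioi hab.le]
  · exact Set.Ioc_disjoint_Ioi le_rfl
  · exact measurableSet_Ioi
  · exact hf.integrableOn
  · exact hf.integrableOn

lemma aux_real (f ρ : ℝ → ℝ) (hf : Integrable f) (hc : Continuous f) (hpos : ∀ x, 0 < f x)
    (hρ : StrictAnti ρ) (r a b : ℝ) (hab : a < b) (hfρ : ∀ x, f (x + r) = ρ x * f x) :
    (∫ x in Set.Ioi (b + r), f x) * (∫ x in Set.Ioi a, f x) <
      (∫ x in Set.Ioi (a + r), f x) * (∫ x in Set.Ioi b, f x) := by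
  have hfr : Integrable (fun x => f (x + r)) := hf.comp_add_right r
  have hcr : Continuous (fun x => f (x + r)) := by fun_prop
  rw [aux_shift f b, aux_shift f a, aux_split f hf a b hab, aux_split _ hfr a b hab]
  have hG : 0 < ∫ x in Set.Ioi b, f x := by
    rw [setIntegral_pos_iff_support_of_nonneg_ae (ae_of_all _ fun x => (hpos x).le)
      hf.integrableOn]
    have : Function.support f = Set.univ := by
      ext x; simp [(hpos x).ne']
    simp [this]
  have h1 : ∫ x in Set.Ioi b, f (x + r) ≤ ρ b * ∫ x in Set.Ioi b, f x := by
    rw [← integral_const_mul]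
    refine setIntegral_mono_on hfr.integrableOn (hf.const_mul _).integrableOn
      measurableSet_Ioi fun x hx => ?_
    rw [hfρ]
    exact mul_le_mul_of_nonneg_right (hρ hx).le (hpos x).le
  have h2 : ρ b * (∫ x in a..b, f x) < ∫ x in a..b, f (x + r) := by
    rw [← intervalIntegral.integral_const_mul]
    refine intervalIntegral.integral_lt_integral_of_continuousOn_of_le_of_exists_lt hab
      (by fun_prop) (by fun_prop) (fun x hx => ?_) ⟨a, ⟨le_rfl, hab.le⟩, ?_⟩
    · rw [hfρ]
      exact mul_le_mul_of_nonneg_right (hρ.antitone hx.2) (hpos x).le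
    · rw [hfρ]
      exact mul_lt_mul_of_pos_right (hρ hab) (hpos a)
  have h3 : 0 ≤ ∫ x in a..b, f x :=
    intervalIntegral.integral_nonneg hab.le fun x _ => (hpos x).le
  nlinarith [mul_le_mul_of_nonneg_right h1 h3, mul_lt_mul_of_pos_right h2 hG]

lemma aux_gauss (m : ℝ) (v : NNReal) (hv : v ≠ 0) (r a b : ℝ) (hr : 0 < r) (hab : a < b) :
    gaussianReal m v (Set.Ici (b + r)) * gaussianReal m v (Set.Ici a) <
      gaussianReal m v (Set.Ici (a + r)) * gaussianReal m v (Set.Ici b) := by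
  have hv' : (0 : ℝ) < v := by exact_mod_cast pos_iff_ne_zero.mpr hv
  have hn : ∀ s, 0 ≤ ∫ x in Set.Ioi s, gaussianPDFReal m v x := fun s =>
    integral_nonneg fun x => gaussianPDFReal_nonneg m v x
  have key := aux_real (gaussianPDFReal m v)
    (fun x => Real.exp (-(r ^ 2 + 2 * r * (x - m)) / (2 * v)))
    (integrable_gaussianPDFReal m v) (by rw [gaussianPDFReal_def]; fun_prop)
    (fun x => gaussianPDFReal_pos m v x hv)
    (fun x y hxy => by
      apply Real.exp_lt_exp.mpr
      apply div_lt_div_of_pos_right _ (by positivity)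
      nlinarith) r a b hab
    (fun x => by
      simp only [gaussianPDFReal]
      rw [mul_left_comm, ← Real.exp_add]
      congr 2
      ring)
  simp only [gaussianReal_apply_eq_integral m hv, integral_Ici_eq_integral_Ioi]
  rw [← ENNReal.ofReal_mul (hn _), ← ENNReal.ofReal_mul (hn _)]
  exact (ENNReal.ofReal_lt_ofReal_iff_of_nonneg (mul_nonneg (hn _) (hn _))).mpr key

/-- Fix `r > 0`, `m ∈ ℝ`, `σ > 0`, and let `X` be a real random variable with
Gaussian distribution `N(m, σ²)`. Then `s ↦ P(X ≥ s + r | X ≥ s)` is strictly decreasing: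
for all `s₁ < s₂`, `P(X ≥ s₂ + r) · P(X ≥ s₁) < P(X ≥ s₁ + r) · P(X ≥ s₂)`. -/
theorem stmt_3 {Ω : Type*} [MeasurableSpace Ω] (P : Measure Ω) [IsProbabilityMeasure P]
    (r m σ : ℝ) (hr : 0 < r) (hσ : 0 < σ) (X : Ω → ℝ) (hX : Measurable X)
    (hlaw : P.map X = gaussianReal m (Real.toNNReal (σ ^ 2)))
    (s₁ s₂ : ℝ) (hs : s₁ < s₂) :
    P {ω | s₂ + r ≤ X ω} * P {ω | s₁ ≤ X ω} <
      P {ω | s₁ + r ≤ X ω} * P {ω | s₂ ≤ X ω} := by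
  have hv : Real.toNNReal (σ ^ 2) ≠ 0 := by
    simp only [ne_eq, Real.toNNReal_eq_zero, not_le]
    positivity
  have h : ∀ s, P {ω | s ≤ X ω} = gaussianReal m (Real.toNNReal (σ ^ 2)) (Set.Ici s) := by
    intro s
    rw [← hlaw, Measure.map_apply hX measurableSet_Ici]
    rfl
  rw [h, h, h, h]
  exact aux_gauss m _ hv r s₁ s₂ hr hs
end

section
/- Let σ₁ > 0, σ₂ > 0, A ≥ 0 and x₀ ∈ ℝ, and let ν be a probability measure on ℝ such that ν((−∞, x)) ≤ A · exp(−(x − x₀)²/(2σ₂²)) for every x < x₀. Define f(x) = (1/(√(2π)·σ₁)) · ∫_ℝ exp(−(x − y)²/(2σ₁²)) dν(y), which is the density of X + N when X has law ν and N is an independent centered Gaussian with variance σ₁². Then f(x) ≤ ((A + 1)/(√(2π)·σ₁)) · exp(−(x − x₀)²/(2(σ₁ + σ₂)²)) for every x < x₀, and f(x) ≤ 1/(√(2π)·σ₁) for every x ∈ ℝ. -/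
open MeasureTheory
open scoped ENNReal

/-- Let `σ₁, σ₂ > 0`, `A ≥ 0`, `x₀ ∈ ℝ`, and let `ν` be a probability measure on
`ℝ` with `ν((-∞, x)) ≤ A exp(-(x - x₀)²/(2σ₂²))` for every `x < x₀`. Let
`f(x) = (1/(√(2π)σ₁)) ∫ exp(-(x - y)²/(2σ₁²)) dν(y)`, the density of `X + N` where `X ~ ν` and
`N` is an independent centered Gaussian of variance `σ₁²`. Then
`f(x) ≤ ((A+1)/(√(2π)σ₁)) exp(-(x - x₀)²/(2(σ₁+σ₂)²))` for `x < x₀`, and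
`f(x) ≤ 1/(√(2π)σ₁)` for all `x`. -/
theorem stmt_4 (σ₁ σ₂ A x₀ : ℝ) (hσ₁ : 0 < σ₁) (hσ₂ : 0 < σ₂) (hA : 0 ≤ A)
    (ν : Measure ℝ) [IsProbabilityMeasure ν]
    (htail : ∀ x : ℝ, x < x₀ →
      ν (Set.Iio x) ≤ ENNReal.ofReal (A * Real.exp (-(x - x₀) ^ 2 / (2 * σ₂ ^ 2)))) :
    (∀ x : ℝ, x < x₀ →
      (1 / (Real.sqrt (2 * Real.pi) * σ₁)) * ∫ y, Real.exp (-(x - y) ^ 2 / (2 * σ₁ ^ 2)) ∂ν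
        ≤ ((A + 1) / (Real.sqrt (2 * Real.pi) * σ₁)) *
            Real.exp (-(x - x₀) ^ 2 / (2 * (σ₁ + σ₂) ^ 2))) ∧
    ∀ x : ℝ,
      (1 / (Real.sqrt (2 * Real.pi) * σ₁)) * ∫ y, Real.exp (-(x - y) ^ 2 / (2 * σ₁ ^ 2)) ∂ν
        ≤ 1 / (Real.sqrt (2 * Real.pi) * σ₁) := by
  have hc : 0 ≤ 1 / (Real.sqrt (2 * Real.pi) * σ₁) := by positivity
  have hle1 : ∀ x y : ℝ, Real.exp (-(x - y) ^ 2 / (2 * σ₁ ^ 2)) ≤ 1 := by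
    intro x y
    rw [Real.exp_le_one_iff, neg_div, neg_nonpos]
    positivity
  have hint : ∀ x : ℝ, Integrable (fun y => Real.exp (-(x - y) ^ 2 / (2 * σ₁ ^ 2))) ν := by
    intro x
    refine Integrable.of_bound (C := 1) ?_ ?_
    · exact Continuous.aestronglyMeasurable (by fun_prop)
    · refine Filter.Eventually.of_forall fun y => ?_
      rw [Real.norm_eq_abs, abs_of_pos (Real.exp_pos _)]
      exact hle1 x y
  constructor
  · intro x hx
    set E := Real.exp (-(x - x₀) ^ 2 / (2 * (σ₁ + σ₂) ^ 2)) with hE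
    have hs : 0 < σ₁ + σ₂ := by positivity
    have hd : 0 < x₀ - x := by linarith
    obtain ⟨z, hz⟩ : ∃ z, z = x + σ₁ * ((x₀ - x) / (σ₁ + σ₂)) := ⟨_, rfl⟩
    have hz1 : z - x = σ₁ * ((x₀ - x) / (σ₁ + σ₂)) := by rw [hz]; ring
    have hz2 : z - x₀ = -(σ₂ * ((x₀ - x) / (σ₁ + σ₂))) := by
      rw [hz]; field_simp; ring
    have hq : 0 < (x₀ - x) / (σ₁ + σ₂) := by positivity
    have hzx : z < x₀ := by
      have := mul_pos hσ₂ hq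
      linarith
    have hzx' : 0 < z - x := by rw [hz1]; positivity
    have e2 : -(z - x₀) ^ 2 / (2 * σ₂ ^ 2) = -(x - x₀) ^ 2 / (2 * (σ₁ + σ₂) ^ 2) := by
      rw [hz2]; field_simp; ring
    have e1 : -(z - x) ^ 2 / (2 * σ₁ ^ 2) = -(x - x₀) ^ 2 / (2 * (σ₁ + σ₂) ^ 2) := by
      rw [hz1]; field_simp; ring
    have ht : ν.real (Set.Iio z) ≤ A * E := by
      have h := htail z hzx
      rw [e2] at h
      exact ENNReal.toReal_le_of_le_ofReal (by positivity) h
    have hind : Integrable ((Set.Iio z).indicator (fun _ => (1 : ℝ))) ν :=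
      (integrable_const 1).indicator measurableSet_Iio
    have key : ∫ y, Real.exp (-(x - y) ^ 2 / (2 * σ₁ ^ 2)) ∂ν ≤ ν.real (Set.Iio z) + E := by
      calc _ ≤ ∫ y, ((Set.Iio z).indicator (fun _ => (1 : ℝ)) y + E) ∂ν := by
            refine integral_mono (hint x) (hind.add (integrable_const E)) fun y => ?_
            by_cases hy : y < z
            · have : (Set.Iio z).indicator (fun _ => (1 : ℝ)) y = 1 :=
                Set.indicator_of_mem (s := Set.Iio z) (Set.mem_Iio.mpr hy) _
              have h3 := hle1 x y
              have h4 : 0 < E := Real.exp_pos _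
              simp only [this]
              linarith
            · have : (Set.Iio z).indicator (fun _ => (1 : ℝ)) y = 0 :=
                Set.indicator_of_notMem (s := Set.Iio z) (fun h => hy (Set.mem_Iio.mp h)) _
              simp only [this, zero_add]
              rw [hE, ← e1]
              apply Real.exp_le_exp.mpr
              have : (z - x) ^ 2 ≤ (x - y) ^ 2 := by
                push Not at hy
                nlinarith
              gcongr
        _ = _ := by
            rw [integral_add hind (integrable_const E), integral_indicator measurableSet_Iio]
            simp
    calc _ ≤ 1 / (Real.sqrt (2 * Real.pi) * σ₁) * (A * E + E) := by
          gcongr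
          linarith
      _ = _ := by ring
  · intro x
    have : ∫ y, Real.exp (-(x - y) ^ 2 / (2 * σ₁ ^ 2)) ∂ν ≤ 1 := by
      calc _ ≤ ∫ _, (1 : ℝ) ∂ν := integral_mono (hint x) (integrable_const 1) (hle1 x)
        _ = 1 := by simp
    exact mul_le_of_le_one_right hc this
end

section
/- Let σ₁ > 0, σ₂ > 0, A ≥ 0 and x₀ ∈ ℝ, and let ν be a probability measure on ℝ such that ν((x, ∞)) ≤ A · exp(−(x − x₀)²/(2σ₂²)) for every x > x₀. Define f(x) = (1/(√(2π)·σ₁)) · ∫_ℝ exp(−(x − y)²/(2σ₁²)) dν(y), which is the density of X + N when X has law ν and N is an independent centered Gaussian with variance σ₁². Then f(x) ≤ ((A + 1)/(√(2π)·σ₁)) · exp(−(x − x₀)²/(2(σ₁ + σ₂)²)) for every x > x₀, and f(x) ≤ 1/(√(2π)·σ₁) for every x ∈ ℝ. -/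
open MeasureTheory
open scoped ENNReal

/-- Let `σ₁, σ₂ > 0`, `A ≥ 0`, `x₀ ∈ ℝ`, and let `ν` be a probability measure on
`ℝ` with `ν((x, ∞)) ≤ A exp(-(x - x₀)²/(2σ₂²))` for every `x > x₀`. Let
`f(x) = (1/(√(2π)σ₁)) ∫ exp(-(x - y)²/(2σ₁²)) dν(y)`, the density of `X + N` where `X ~ ν` and
`N` is an independent centered Gaussian of variance `σ₁²`. Then
`f(x) ≤ ((A+1)/(√(2π)σ₁)) exp(-(x - x₀)²/(2(σ₁+σ₂)²))` for `x > x₀`, and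
`f(x) ≤ 1/(√(2π)σ₁)` for all `x`. -/
theorem stmt_5 (σ₁ σ₂ A x₀ : ℝ) (hσ₁ : 0 < σ₁) (hσ₂ : 0 < σ₂) (hA : 0 ≤ A)
    (ν : Measure ℝ) [IsProbabilityMeasure ν]
    (htail : ∀ x : ℝ, x₀ < x →
      ν (Set.Ioi x) ≤ ENNReal.ofReal (A * Real.exp (-(x - x₀) ^ 2 / (2 * σ₂ ^ 2)))) :
    (∀ x : ℝ, x₀ < x →
      (1 / (Real.sqrt (2 * Real.pi) * σ₁)) * ∫ y, Real.exp (-(x - y) ^ 2 / (2 * σ₁ ^ 2)) ∂ν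
        ≤ ((A + 1) / (Real.sqrt (2 * Real.pi) * σ₁)) *
            Real.exp (-(x - x₀) ^ 2 / (2 * (σ₁ + σ₂) ^ 2))) ∧
    ∀ x : ℝ,
      (1 / (Real.sqrt (2 * Real.pi) * σ₁)) * ∫ y, Real.exp (-(x - y) ^ 2 / (2 * σ₁ ^ 2)) ∂ν
        ≤ 1 / (Real.sqrt (2 * Real.pi) * σ₁) := by
  have hexp1 : ∀ x y : ℝ, Real.exp (-(x - y) ^ 2 / (2 * σ₁ ^ 2)) ≤ 1 := by
    intro x y
    rw [Real.exp_le_one_iff, neg_div]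
    have : 0 ≤ (x - y) ^ 2 / (2 * σ₁ ^ 2) := by positivity
    linarith
  have hint : ∀ x : ℝ, Integrable (fun y => Real.exp (-(x - y) ^ 2 / (2 * σ₁ ^ 2))) ν := by
    intro x
    refine Integrable.of_bound (C := 1) (by fun_prop) (Filter.Eventually.of_forall fun y => ?_)
    rw [Real.norm_eq_abs, abs_of_pos (Real.exp_pos _)]
    exact hexp1 x y
  have hc : 0 ≤ 1 / (Real.sqrt (2 * Real.pi) * σ₁) := by positivity
  constructor
  · intro x hx
    have hs : 0 < σ₁ + σ₂ := by positivity
    have hd : 0 < x - x₀ := by linarith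
    set E := Real.exp (-(x - x₀) ^ 2 / (2 * (σ₁ + σ₂) ^ 2)) with hE
    obtain ⟨r, hr⟩ : ∃ r, r = (x - x₀) / (σ₁ + σ₂) := ⟨_, rfl⟩
    have hr0 : 0 < r := by rw [hr]; positivity
    have hxr : x - x₀ = r * (σ₁ + σ₂) := by rw [hr]; field_simp
    have hEr : E = Real.exp (-r ^ 2 / 2) := by
      rw [hE, hxr]; congr 1; field_simp
    set t := x₀ + r * σ₂ with ht
    have htt : x₀ < t := by have := mul_pos hr0 hσ₂; linarith
    have hm : ν.real (Set.Ioi t) ≤ A * E := by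
      have h := htail t htt
      have h2 : Real.exp (-(t - x₀) ^ 2 / (2 * σ₂ ^ 2)) = E := by
        rw [hEr, ht]; congr 1; field_simp; ring
      rw [h2] at h
      exact ENNReal.toReal_le_of_le_ofReal (mul_nonneg hA (Real.exp_pos _).le) h
    have hI : Integrable ((Set.Ioi t).indicator (fun _ : ℝ => (1 : ℝ))) ν :=
      (integrable_const (1 : ℝ)).indicator measurableSet_Ioi
    have hb : ∫ y, Real.exp (-(x - y) ^ 2 / (2 * σ₁ ^ 2)) ∂ν
        ≤ ∫ y, (E + (Set.Ioi t).indicator (fun _ : ℝ => (1 : ℝ)) y) ∂ν := by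
      refine integral_mono (hint x) ((integrable_const E).add hI) fun y => ?_
      have hE0 : 0 < E := Real.exp_pos _
      by_cases hy : t < y
      · have := hexp1 x y
        simp only [Set.indicator_of_mem (Set.mem_Ioi.2 hy)]
        linarith
      · simp only [Set.indicator_of_notMem (s := Set.Ioi t) (a := y) hy, add_zero]
        rw [hEr]
        apply Real.exp_le_exp.2
        have h1 : r * σ₁ ≤ x - y := by
          have : y ≤ t := not_lt.1 hy
          nlinarith
        have h2 : (r * σ₁) ^ 2 ≤ (x - y) ^ 2 :=
          pow_le_pow_left₀ (by positivity) h1 2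
        rw [div_le_div_iff₀ (by positivity) (by positivity)]
        nlinarith
    rw [integral_add (integrable_const E) hI, integral_indicator_const _ measurableSet_Ioi] at hb
    simp only [integral_const, probReal_univ, smul_eq_mul, one_mul, mul_one] at hb
    calc _ ≤ 1 / (Real.sqrt (2 * Real.pi) * σ₁) * ((A + 1) * E) :=
          mul_le_mul_of_nonneg_left (by linarith) hc
      _ = _ := by ring
  · intro x
    have h := integral_mono (hint x) (integrable_const (μ := ν) (1 : ℝ)) (fun y => hexp1 x y)
    simp only [integral_const, probReal_univ, smul_eq_mul, mul_one] at h
    exact mul_le_of_le_one_right hc h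
end

section
/- For every real η with 0 < η ≤ 1/2, one has (2·√(2π)/η) · ∫₀^{1.1·η^{1/2}} y · φ_η(y) · Φ̃_{1−η}(y) dy ≤ 1/2. -/
open MeasureTheory

/-- `φ_v(x) = (2πv)^{-1/2} exp(-x²/(2v))`, the centered Gaussian density of variance `v`. -/
noncomputable def gaussDensity (v x : ℝ) : ℝ :=
  (Real.sqrt (2 * Real.pi * v))⁻¹ * Real.exp (-x ^ 2 / (2 * v))

/-- `Φ̃_v(x) = ∫₀^x φ_v(w) dw`. -/
noncomputable def gaussPartialCDF (v x : ℝ) : ℝ :=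
  ∫ w in (0 : ℝ)..x, gaussDensity v w

lemma gaussDensity_nonneg' (v x : ℝ) : 0 ≤ gaussDensity v x := by
  unfold gaussDensity; positivity

lemma gaussPartialCDF_bound (η : ℝ) (hη : η ≤ 1 / 2) (y : ℝ) (hy : 0 ≤ y) :
    ‖gaussPartialCDF (1 - η) y‖ ≤ (Real.sqrt Real.pi)⁻¹ * y := by
  have hpi := Real.pi_pos
  have h := intervalIntegral.norm_integral_le_of_norm_le_const
    (a := 0) (b := y) (f := gaussDensity (1 - η)) (C := (Real.sqrt Real.pi)⁻¹) (by
      intro x _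
      rw [Real.norm_of_nonneg (gaussDensity_nonneg' _ _)]
      unfold gaussDensity
      have h1 : Real.sqrt Real.pi ≤ Real.sqrt (2 * Real.pi * (1 - η)) :=
        Real.sqrt_le_sqrt (by nlinarith)
      have h2 : Real.exp (-x ^ 2 / (2 * (1 - η))) ≤ 1 := by
        rw [Real.exp_le_one_iff]
        apply div_nonpos_of_nonpos_of_nonneg
        · nlinarith [sq_nonneg x]
        · linarith
      have h3 : (Real.sqrt (2 * Real.pi * (1 - η)))⁻¹ ≤ (Real.sqrt Real.pi)⁻¹ :=
        inv_anti₀ (by positivity) h1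
      calc _ ≤ (Real.sqrt Real.pi)⁻¹ * 1 := by gcongr
        _ = _ := mul_one _)
  rw [sub_zero, abs_of_nonneg hy] at h
  exact h

lemma mul_gaussDensity_bound (η : ℝ) (hη0 : 0 < η) (y : ℝ) (hy : 0 ≤ y) :
    y * gaussDensity η y ≤ (2 * Real.sqrt Real.pi)⁻¹ := by
  have hpi := Real.pi_pos
  have hsp : 0 < Real.sqrt Real.pi := Real.sqrt_pos.mpr hpi
  have hs : 0 < Real.sqrt (2 * η) := Real.sqrt_pos.mpr (by positivity)
  have hss : Real.sqrt (2 * η) ^ 2 = 2 * η := Real.sq_sqrt (by positivity)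
  have e1 : Real.sqrt (2 * Real.pi * η) = Real.sqrt (2 * η) * Real.sqrt Real.pi := by
    rw [← Real.sqrt_mul (by positivity)]; congr 1; ring
  unfold gaussDensity
  rw [e1]
  generalize Real.sqrt (2 * η) = s at *
  rw [← hss]
  have e2 : Real.exp (-y ^ 2 / s ^ 2) ≤ (1 + y ^ 2 / s ^ 2)⁻¹ := by
    rw [neg_div, Real.exp_neg]
    apply inv_anti₀ (by positivity)
    linarith [Real.add_one_le_exp (y ^ 2 / s ^ 2)]
  calc y * ((s * Real.sqrt Real.pi)⁻¹ * Real.exp (-y ^ 2 / s ^ 2))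
      ≤ y * ((s * Real.sqrt Real.pi)⁻¹ * (1 + y ^ 2 / s ^ 2)⁻¹) := by gcongr
    _ = (y * s / (s ^ 2 + y ^ 2)) * (Real.sqrt Real.pi)⁻¹ := by field_simp
    _ ≤ (1 / 2) * (Real.sqrt Real.pi)⁻¹ := by
      apply mul_le_mul_of_nonneg_right _ (by positivity)
      rw [div_le_div_iff₀ (by positivity) (by norm_num)]
      nlinarith [sq_nonneg (y - s)]
    _ = (2 * Real.sqrt Real.pi)⁻¹ := by rw [mul_inv]; norm_num

/-- For every real `η` with `0 < η ≤ 1/2`,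
`(2√(2π)/η) ∫₀^{1.1 √η} y φ_η(y) Φ̃_{1-η}(y) dy ≤ 1/2`; i.e. the standard Brownian meander at
time `η` lies below `1.1 η^{1/2}` with probability at most `1/2`. -/
theorem stmt_6 (η : ℝ) (hη0 : 0 < η) (hη : η ≤ 1 / 2) :
    (2 * Real.sqrt (2 * Real.pi) / η) *
        ∫ y in (0 : ℝ)..(1.1 * Real.sqrt η),
          y * gaussDensity η y * gaussPartialCDF (1 - η) y
      ≤ 1 / 2 := by
  have hpi := Real.pi_pos
  have hsη : 0 < Real.sqrt η := Real.sqrt_pos.mpr hη0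
  have hsp : 0 < Real.sqrt Real.pi := Real.sqrt_pos.mpr hpi
  have key := intervalIntegral.norm_integral_le_of_norm_le (μ := volume)
    (a := 0) (b := 1.1 * Real.sqrt η)
    (f := fun y => y * gaussDensity η y * gaussPartialCDF (1 - η) y)
    (g := fun y => (2 * Real.pi)⁻¹ * y) (by positivity)
    (Filter.Eventually.of_forall (by
      intro y hy
      have hy0 : 0 ≤ y := hy.1.le
      rw [norm_mul, Real.norm_of_nonneg (mul_nonneg hy0 (gaussDensity_nonneg' _ _))]
      calc _ ≤ (2 * Real.sqrt Real.pi)⁻¹ * ((Real.sqrt Real.pi)⁻¹ * y) :=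
            mul_le_mul (mul_gaussDensity_bound η hη0 y hy0)
              (gaussPartialCDF_bound η hη y hy0) (norm_nonneg _) (by positivity)
        _ = (2 * (Real.sqrt Real.pi * Real.sqrt Real.pi))⁻¹ * y := by
            field_simp
        _ = _ := by rw [Real.mul_self_sqrt hpi.le]))
    (Continuous.intervalIntegrable (by fun_prop) _ _)
  have hint : ∫ y in (0 : ℝ)..(1.1 * Real.sqrt η), (2 * Real.pi)⁻¹ * y
      = (2 * Real.pi)⁻¹ * (1.21 * η / 2) := by
    rw [intervalIntegral.integral_const_mul, integral_id, mul_pow, Real.sq_sqrt hη0.le]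
    norm_num
  rw [hint] at key
  have key2 := (le_abs_self _).trans key
  have hq : 0 < Real.sqrt (2 * Real.pi) := Real.sqrt_pos.mpr (by positivity)
  have hq2 : Real.sqrt (2 * Real.pi) ^ 2 = 2 * Real.pi := Real.sq_sqrt (by positivity)
  have hq3 : 2.42 ≤ Real.sqrt (2 * Real.pi) :=
    Real.le_sqrt_of_sq_le (by nlinarith [Real.pi_gt_three])
  calc _ ≤ (2 * Real.sqrt (2 * Real.pi) / η) * ((2 * Real.pi)⁻¹ * (1.21 * η / 2)) := by
        gcongr
    _ = 1.21 / Real.sqrt (2 * Real.pi) := by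
        rw [← hq2]
        simp only [Real.sqrt_sq hq.le]
        field_simp
    _ ≤ 1 / 2 := by
        rw [div_le_div_iff₀ hq (by norm_num)]
        linarith
end

section
/- Let η > 0, let t ∈ (η, 1 − 4η], set s = t − η, and let x be a real number with 0 < x ≤ 1.1·η^{1/2}. Then ∫₀^{1.1·η^{1/2}} (φ_η(y − x) − φ_η(y + x)) · (Φ̃_{1−t}(y)/Φ̃_{1−s}(x)) dy ≤ 3/4. -/
open MeasureTheory

lemma gd_cont (v : ℝ) : Continuous (gaussDensity v) := by
  unfold gaussDensity
  fun_prop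

lemma gp_cont (v : ℝ) : Continuous (gaussPartialCDF v) := by
  unfold gaussPartialCDF
  exact intervalIntegral.continuous_primitive
    (fun a b => (gd_cont v).intervalIntegrable a b) 0

lemma gp_nonneg (v y : ℝ) (hy : 0 ≤ y) : 0 ≤ gaussPartialCDF v y := by
  unfold gaussPartialCDF
  apply intervalIntegral.integral_nonneg hy
  intro u _
  unfold gaussDensity
  positivity

lemma gp_upper (v y : ℝ) (hv : 0 < v) (hy : 0 ≤ y) :
    gaussPartialCDF v y ≤ (Real.sqrt (2 * Real.pi * v))⁻¹ * y := by
  have h : gaussPartialCDF v y ≤ ∫ _w in (0:ℝ)..y, (Real.sqrt (2 * Real.pi * v))⁻¹ := by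
    unfold gaussPartialCDF
    apply intervalIntegral.integral_mono_on hy ((gd_cont v).intervalIntegrable _ _)
      (by simp)
    intro w _
    unfold gaussDensity
    apply mul_le_of_le_one_right (by positivity)
    rw [Real.exp_le_one_iff]
    have : 0 ≤ w ^ 2 / (2 * v) := by positivity
    rw [neg_div]; linarith
  rw [intervalIntegral.integral_const, smul_eq_mul] at h
  linarith

lemma gp_lower (v x : ℝ) (hv : 0 < v) (hx : 0 ≤ x) (hxv : x ^ 2 ≤ 0.242 * v) :
    (Real.sqrt (2 * Real.pi * v))⁻¹ * 0.879 * x ≤ gaussPartialCDF v x := by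
  have h : (∫ _w in (0:ℝ)..x, (Real.sqrt (2 * Real.pi * v))⁻¹ * 0.879)
      ≤ gaussPartialCDF v x := by
    unfold gaussPartialCDF
    apply intervalIntegral.integral_mono_on hx (by simp)
      ((gd_cont v).intervalIntegrable _ _)
    intro w hw
    unfold gaussDensity
    apply mul_le_mul_of_nonneg_left _ (by positivity)
    have h1 := Real.add_one_le_exp (-w ^ 2 / (2 * v))
    have h2 : w ^ 2 ≤ x ^ 2 := by
      have := hw.1; have := hw.2; gcongr
    have h3 : w ^ 2 / (2 * v) ≤ 0.121 := by
      rw [div_le_iff₀ (by positivity)]; linarith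
    rw [neg_div] at h1 ⊢
    norm_num at h3 ⊢
    linarith
  rw [intervalIntegral.integral_const, smul_eq_mul] at h
  linarith

lemma diff_upper (v x y r : ℝ) (hr : 0 < r) (hv : v = r ^ 2) (hx : 0 ≤ x) (hy : 0 ≤ y) :
    gaussDensity v (y - x) - gaussDensity v (y + x) ≤ (2.5 * r)⁻¹ * (2 * x * y / r ^ 2) := by
  subst hv
  unfold gaussDensity
  rw [← mul_sub]
  have hs : 2.5 * r ≤ Real.sqrt (2 * Real.pi * r ^ 2) := by
    apply Real.le_sqrt_of_sq_le
    have := Real.pi_gt_d6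
    nlinarith [sq_nonneg r]
  have hA : -(y + x) ^ 2 / (2 * r ^ 2) = -(y - x) ^ 2 / (2 * r ^ 2) + -(2 * x * y / r ^ 2) := by
    field_simp; ring
  have hE : Real.exp (-(y - x) ^ 2 / (2 * r ^ 2)) ≤ 1 := by
    rw [Real.exp_le_one_iff, neg_div]
    have : 0 ≤ (y - x) ^ 2 / (2 * r ^ 2) := by positivity
    linarith
  have hE0 := Real.exp_pos (-(y - x) ^ 2 / (2 * r ^ 2))
  have h1 := Real.add_one_le_exp (-(2 * x * y / r ^ 2))
  have hd : 0 ≤ 2 * x * y / r ^ 2 := by positivity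
  have hb : Real.exp (-(y - x) ^ 2 / (2 * r ^ 2)) - Real.exp (-(y + x) ^ 2 / (2 * r ^ 2))
      ≤ 2 * x * y / r ^ 2 := by
    rw [hA, Real.exp_add]
    nlinarith
  calc _ ≤ (Real.sqrt (2 * Real.pi * r ^ 2))⁻¹ * (2 * x * y / r ^ 2) :=
        mul_le_mul_of_nonneg_left hb (by positivity)
    _ ≤ _ := by
        apply mul_le_mul_of_nonneg_right _ hd
        exact inv_anti₀ (by positivity) hs

lemma ratio_upper (V W x y : ℝ) (hV : 0 < V) (hW : 0 < W) (hWV : W ≤ 1.25 * V) (hx : 0 < x)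
    (hxv : x ^ 2 ≤ 0.242 * W) (hy : 0 ≤ y) :
    gaussPartialCDF V y / gaussPartialCDF W x ≤ 1.28 * (y / x) := by
  have hl := gp_lower W x hW hx.le hxv
  have hu := gp_upper V y hV hy
  have hpi := Real.pi_pos
  have hsW : 0 < Real.sqrt (2 * Real.pi * W) := by positivity
  have hsV : 0 < Real.sqrt (2 * Real.pi * V) := by positivity
  have hs : Real.sqrt (2 * Real.pi * W) ≤ 1.12 * Real.sqrt (2 * Real.pi * V) := by
    apply Real.sqrt_le_left (by positivity) |>.mpr
    rw [mul_pow, Real.sq_sqrt (by positivity)]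
    have : Real.pi * W ≤ Real.pi * (1.25 * V) := by gcongr
    have : 0 < Real.pi * V := by positivity
    norm_num at *
    linarith
  have hc : (Real.sqrt (2 * Real.pi * V))⁻¹ ≤ 1.12 * (Real.sqrt (2 * Real.pi * W))⁻¹ := by
    rw [← div_eq_mul_inv, le_div_iff₀ hsW, inv_mul_le_iff₀ hsV]
    linarith
  have hcW : 0 < (Real.sqrt (2 * Real.pi * W))⁻¹ := by positivity
  have hpos : 0 < gaussPartialCDF W x := lt_of_lt_of_le (by positivity) hl
  rw [div_le_iff₀ hpos]
  calc _ ≤ (Real.sqrt (2 * Real.pi * V))⁻¹ * y := hu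
    _ ≤ 1.12 * (Real.sqrt (2 * Real.pi * W))⁻¹ * y := by gcongr
    _ ≤ 1.28 * (y / x) * ((Real.sqrt (2 * Real.pi * W))⁻¹ * 0.879 * x) := by
        have e : 1.28 * (y / x) * ((Real.sqrt (2 * Real.pi * W))⁻¹ * 0.879 * x)
          = 1.28 * 0.879 * ((Real.sqrt (2 * Real.pi * W))⁻¹ * y) := by
          field_simp
        rw [e]
        have : 0 ≤ (Real.sqrt (2 * Real.pi * W))⁻¹ * y := by positivity
        norm_num at *
        linarith
    _ ≤ _ := by gcongr

/-- Let `η > 0`, `t ∈ (η, 1 - 4η]`, `s = t - η`, and `0 < x ≤ 1.1 η^{1/2}`. Then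
`∫₀^{1.1 √η} (φ_η(y - x) - φ_η(y + x)) · Φ̃_{1-t}(y)/Φ̃_{1-s}(x) dy ≤ 3/4`; i.e. the standard
Brownian meander, at value `x` at time `t - η`, lies below `1.1 η^{1/2}` at time `t` with
probability at most `3/4`. -/
theorem stmt_7 (η t x : ℝ) (hη : 0 < η) (ht1 : η < t) (ht2 : t ≤ 1 - 4 * η)
    (hx0 : 0 < x) (hx : x ≤ 1.1 * Real.sqrt η) :
    (∫ y in (0 : ℝ)..(1.1 * Real.sqrt η),
        (gaussDensity η (y - x) - gaussDensity η (y + x)) *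
          (gaussPartialCDF (1 - t) y / gaussPartialCDF (1 - (t - η)) x))
      ≤ 3 / 4 := by

  set r := Real.sqrt η with hr
  have hr0 : 0 < r := Real.sqrt_pos.mpr hη
  have hr2 : η = r ^ 2 := (Real.sq_sqrt hη.le).symm
  have hbase : 0 ≤ 1.1 * r := by positivity
  have hV : 0 < 1 - t := by linarith
  have hW : 0 < 1 - (t - η) := by linarith
  have hx2 : x ^ 2 ≤ 0.242 * (1 - (t - η)) := by
    have : x ^ 2 ≤ (1.1 * r) ^ 2 := by gcongr
    rw [mul_pow, ← hr2] at this
    norm_num at *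
    linarith
  have hWV : 1 - (t - η) ≤ 1.25 * (1 - t) := by
    norm_num at *
    linarith
  have key : (∫ y in (0 : ℝ)..(1.1 * r),
        (gaussDensity η (y - x) - gaussDensity η (y + x)) *
          (gaussPartialCDF (1 - t) y / gaussPartialCDF (1 - (t - η)) x))
      ≤ ∫ y in (0 : ℝ)..(1.1 * r), (1.024 / r ^ 3) * y ^ 2 := by
    apply intervalIntegral.integral_mono_on hbase
    · apply Continuous.intervalIntegrable
      have h1 := gd_cont η
      have h2 := gp_cont (1 - t)
      exact ((h1.comp (by fun_prop)).sub (h1.comp (by fun_prop))).mul (h2.div_const _)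
    · apply Continuous.intervalIntegrable
      fun_prop
    · intro y hy
      have hy0 := hy.1
      calc _ ≤ ((2.5 * r)⁻¹ * (2 * x * y / r ^ 2)) * (1.28 * (y / x)) :=
            mul_le_mul (diff_upper η x y r hr0 hr2 hx0.le hy0)
              (ratio_upper _ _ x y hV hW hWV hx0 hx2 hy0)
              (div_nonneg (gp_nonneg _ _ hy0) (gp_nonneg _ _ hx0.le)) (by positivity)
        _ = _ := by
            field_simp
            norm_num
            ring
  refine key.trans ?_
  rw [intervalIntegral.integral_const_mul, integral_pow]
  have : 1.024 / r ^ 3 * (((1.1 * r) ^ (2 + 1) - 0 ^ (2 + 1)) / ((2 : ℕ) + 1)) =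
      1.024 * 1.331 / 3 := by
    field_simp
    norm_num
    ring
  rw [this]
  norm_num
end

section
/- There exists an absolute constant δ > 0 such that the following holds: for all η > 0, all σ² ≥ 11η, and all x ≥ 1.1·η^{1/2}, if Z is a real random variable with the Gaussian distribution N(0, σ²), then P(x − η^{1/2} ≤ |Z| ≤ x) ≤ (1 − δ) · P(|Z| ≤ x). -/
open MeasureTheory ProbabilityTheory
open scoped ENNReal

lemma pdf_anti (v : NNReal) {y z : ℝ} (h : |y| ≤ |z|) :
    gaussianPDF 0 v z ≤ gaussianPDF 0 v y := by
  unfold gaussianPDF gaussianPDFReal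
  apply ENNReal.ofReal_le_ofReal
  have h2 : y ^ 2 ≤ z ^ 2 := sq_le_sq.mpr h
  simp only [sub_zero]
  gcongr

lemma gauss_real (v : NNReal) (hv : v ≠ 0) (s x : ℝ) (hs : 0 < s) (hx : 1.1 * s ≤ x) :
    gaussianReal 0 v {y | x - s ≤ |y| ∧ |y| ≤ x} ≤
      ENNReal.ofReal (1 - 1 / 11) * gaussianReal 0 v {y | |y| ≤ x} := by
  have ha : s / 10 ≤ x - s := by norm_num at hx; linarith
  set a := x - s with hadef
  have ha0 : 0 < a := by linarith
  set A : Set ℝ := {y | a ≤ |y| ∧ |y| ≤ x} with hA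
  set B : Set ℝ := {y | |y| < a} with hB
  have hmA : MeasurableSet A :=
    (measurableSet_le measurable_const continuous_abs.measurable).inter
      (measurableSet_le continuous_abs.measurable measurable_const)
  have hmB : MeasurableSet B := measurableSet_lt continuous_abs.measurable measurable_const
  have hC : {y : ℝ | |y| ≤ x} = A ∪ B := by
    ext y
    simp only [hA, hB, Set.mem_union, Set.mem_ofPred_eq]
    constructor
    · intro h
      rcases le_or_gt a |y| with h1 | h1
      · exact Or.inl ⟨h1, h⟩
      · exact Or.inr h1
    · rintro (h | h)
      · exact h.2
      · linarith
  have hd : Disjoint A B := by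
    rw [Set.disjoint_left]
    intro y h1 h2
    exact absurd h1.1 (not_le.mpr h2)
  have habs : |a| = a := abs_of_pos ha0
  have volA : volume A ≤ ENNReal.ofReal (2 * s) := by
    have hsub : A ⊆ Set.Icc a x ∪ Set.Icc (-x) (-a) := by
      rintro y ⟨h1, h2⟩
      have := abs_le.mp h2
      rcases le_abs.mp h1 with h | h
      · exact Or.inl ⟨h, this.2⟩
      · exact Or.inr ⟨this.1, by linarith⟩
    refine (measure_mono hsub).trans ((measure_union_le _ _).trans ?_)
    rw [Real.volume_Icc, Real.volume_Icc, ← ENNReal.ofReal_add (by linarith) (by linarith)]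
    apply ENNReal.ofReal_le_ofReal
    linarith
  have volB : volume B = ENNReal.ofReal (2 * a) := by
    have : B = Set.Ioo (-a) a := by
      ext y
      simp [hB, abs_lt]
    rw [this, Real.volume_Ioo]
    congr 1
    ring
  have gA : gaussianReal 0 v A ≤ gaussianPDF 0 v a * ENNReal.ofReal (2 * s) := by
    rw [gaussianReal_apply 0 hv]
    calc ∫⁻ y in A, gaussianPDF 0 v y ≤ ∫⁻ _ in A, gaussianPDF 0 v a :=
          setLIntegral_mono' hmA fun y hy => pdf_anti v (by rw [habs]; exact hy.1)
      _ = gaussianPDF 0 v a * volume A := setLIntegral_const _ _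
      _ ≤ _ := by gcongr
  have gB : gaussianPDF 0 v a * ENNReal.ofReal (2 * a) ≤ gaussianReal 0 v B := by
    rw [gaussianReal_apply 0 hv, ← volB, ← setLIntegral_const]
    exact setLIntegral_mono' hmB fun y hy => pdf_anti v (by rw [habs]; exact le_of_lt hy)
  have key : gaussianReal 0 v A ≤ 10 * gaussianReal 0 v B := by
    calc gaussianReal 0 v A ≤ gaussianPDF 0 v a * ENNReal.ofReal (2 * s) := gA
      _ ≤ gaussianPDF 0 v a * ENNReal.ofReal (10 * (2 * a)) := by
          refine mul_le_mul_right (ENNReal.ofReal_le_ofReal ?_) _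
          linarith
      _ = 10 * (gaussianPDF 0 v a * ENNReal.ofReal (2 * a)) := by
          rw [ENNReal.ofReal_mul (by norm_num)]
          rw [show ENNReal.ofReal 10 = 10 by norm_num]
          ring
      _ ≤ _ := by gcongr
  rw [hC, measure_union hd hmB]
  have fA : gaussianReal 0 v A ≠ ⊤ := measure_ne_top _ _
  have fB : gaussianReal 0 v B ≠ ⊤ := measure_ne_top _ _
  generalize gaussianReal 0 v A = p at *
  generalize gaussianReal 0 v B = q at *
  lift p to NNReal using fA
  lift q to NNReal using fB
  have key' : (p : ℝ) ≤ 10 * q := by exact_mod_cast key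
  rw [← ENNReal.ofReal_coe_nnreal, ← ENNReal.ofReal_coe_nnreal,
    ← ENNReal.ofReal_add p.coe_nonneg q.coe_nonneg, ← ENNReal.ofReal_mul (by norm_num)]
  apply ENNReal.ofReal_le_ofReal
  linarith

/-- There is an absolute constant `δ > 0` such that for all `η > 0`, all
variances `σ² ≥ 11η`, and all `x ≥ 1.1 η^{1/2}`: if `Z` has Gaussian distribution `N(0, σ²)`,
then `P(x - η^{1/2} ≤ |Z| ≤ x) ≤ (1 - δ) · P(|Z| ≤ x)`. -/
theorem stmt_8 : ∃ δ : ℝ, 0 < δ ∧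
    ∀ (η v : ℝ), 0 < η → 11 * η ≤ v →
    ∀ (Ω : Type) (_ : MeasurableSpace Ω) (P : Measure Ω), IsProbabilityMeasure P →
    ∀ (Z : Ω → ℝ), Measurable Z →
      P.map Z = gaussianReal 0 (Real.toNNReal v) →
      ∀ x : ℝ, 1.1 * Real.sqrt η ≤ x →
        P {ω | x - Real.sqrt η ≤ |Z ω| ∧ |Z ω| ≤ x} ≤
          ENNReal.ofReal (1 - δ) * P {ω | |Z ω| ≤ x} := by
  refine ⟨1 / 11, by norm_num, ?_⟩
  intro η v hη hv Ω _ P _ Z hZ hmap x hx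
  have h := gauss_real v.toNNReal (by simp; linarith) (Real.sqrt η) x (Real.sqrt_pos.mpr hη) hx
  rw [← hmap, Measure.map_apply hZ, Measure.map_apply hZ] at h
  · exact h
  · exact measurableSet_le continuous_abs.measurable measurable_const
  · exact (measurableSet_le measurable_const continuous_abs.measurable).inter
      (measurableSet_le continuous_abs.measurable measurable_const)
end
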